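/- Let η ∈ (−1,0), T > 0, and let r ≥ 1 be an integer. Let u₀ ∈ 𝒮′(ℝ) be 1-periodic (invariant under translation by 1) with ‖u₀‖_{C^η} := sup { λ^{−η} |⟨u₀, φ_x^λ⟩| : φ ∈ B^r_0, x ∈ ℝ, λ ∈ (0,1] } < ∞. Define (P u₀)(t,x) := ⟨u₀, P_t(x−·)⟩ for (t,x) ∈ (0,T] × ℝ. Then for every γ ∈ (0,1) there is a constant C, independent of u₀, such that sup_{(t,x)∈(0,T]×ℝ} |t|₀^{−η} |(P u₀)(t,x)| + sup_{t∈(0,T]} sup_{x≠x̄∈ℝ} |(P u₀)(t,x̄) − (P u₀)(t,x)| / (|t|₀^{η−γ} |x̄−x|^γ) + sup_{x∈ℝ} sup_{t≠t̄∈(0,T], |t̄−t|≤|t,t̄|₀²} |(P u₀)(t̄,x) − (P u₀)(t,x)| / (|t,t̄|₀^{η−γ} |t̄−t|^{γ/2}) ≤ C ‖u₀‖_{C^η}. -/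

import Mathlib

open Real MeasureTheory

noncomputable section

/-- `φ ∈ B^r_0`: a smooth function supported in `[-1,1]` whose derivatives up to
order `r` are bounded by `1`. -/
def IsTestFunction (r : ℕ) (φ : ℝ → ℝ) : Prop :=
  ContDiff ℝ (⊤ : ℕ∞) φ ∧ (∀ y : ℝ, y ∉ Set.Icc (-1 : ℝ) 1 → φ y = 0) ∧
    ∀ j ≤ r, ∀ y : ℝ, |iteratedDeriv j φ y| ≤ 1

/-- The heat kernel `P_t(x) = (4πt)^{-1/2} e^{-x²/(4t)}` for `t > 0`, and `0`
for `t ≤ 0`. -/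
def heatKernel (t x : ℝ) : ℝ :=
  if 0 < t then (4 * Real.pi * t) ^ (-(1 : ℝ) / 2) * Real.exp (-(x ^ 2) / (4 * t)) else 0

/-- `|t|₀ = |t|^{1/2} ∧ 1`. -/
def tnorm (t : ℝ) : ℝ := min (Real.sqrt |t|) 1

/-- `|t,t̄|₀ = |t|₀ ∧ |t̄|₀`. -/
def tnorm2 (t s : ℝ) : ℝ := min (tnorm t) (tnorm s)

/-- The parabolic distance `‖z̄ - z‖_s = |t̄-t|^{1/2} ∨ |x̄-x|`. -/
def pnormS (z w : ℝ × ℝ) : ℝ := max (Real.sqrt |z.1 - w.1|) |z.2 - w.2|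


open scoped ContDiff Topology

lemma leib_aux (n : ℕ) (m g : ℝ → ℝ) (hm : ContDiff ℝ ∞ m) (hg : ContDiff ℝ ∞ g) (z D E : ℝ)
    (hD : ∀ i ≤ n, |iteratedDeriv i m z| ≤ D) (hE : ∀ i ≤ n, |iteratedDeriv i g z| ≤ E) :
    |iteratedDeriv n (fun y => m y * g y) z| ≤ 2 ^ n * (D * E) := by
  have h := norm_iteratedFDeriv_mul_le (𝕜 := ℝ) hm hg z (n := n) (mod_cast le_top)
  simp only [norm_iteratedFDeriv_eq_norm_iteratedDeriv, Real.norm_eq_abs] at h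
  refine h.trans ?_
  have hD0 : 0 ≤ D := (abs_nonneg _).trans (hD 0 (Nat.zero_le _))
  calc _ ≤ ∑ i ∈ Finset.range (n + 1), (n.choose i : ℝ) * (D * E) := by
        refine Finset.sum_le_sum fun i hi => ?_
        have hi' : i ≤ n := by simpa [Nat.lt_succ_iff] using hi
        rw [mul_assoc]
        exact mul_le_mul_of_nonneg_left (mul_le_mul (hD i hi') (hE _ (Nat.sub_le _ _))
          (abs_nonneg _) hD0) (by positivity)
    _ = _ := by
        rw [← Finset.sum_mul]
        congr 1
        exact_mod_cast Nat.sum_range_choose n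

lemma iter_zero_aux (f : ℝ → ℝ) (z : ℝ) (h : ∀ᶠ y in 𝓝 z, f y = 0) (i : ℕ) :
    iteratedDeriv i f z = 0 := by
  have h' : f =ᶠ[𝓝 z] (fun _ => (0:ℝ)) := h
  rw [h'.iteratedDeriv_eq]
  simp

lemma sig_bound_one (i : ℕ) : ∃ D, ∀ z, |iteratedDeriv i Real.smoothTransition z| ≤ D := by
  have hc : Continuous (iteratedDeriv i Real.smoothTransition) :=
    (Real.smoothTransition.contDiff (n := i)).continuous_iteratedDeriv i le_rfl
  obtain ⟨D, hD⟩ := (isCompact_Icc (a := (0:ℝ)) (b := 1)).exists_bound_of_continuousOn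
    hc.continuousOn
  refine ⟨max D 1, fun z => ?_⟩
  by_cases hz : z ∈ Set.Icc (0:ℝ) 1
  · exact (hD z hz).trans (le_max_left _ _)
  · rw [Set.mem_Icc, not_and_or, not_le, not_le] at hz
    rcases hz with hz | hz
    · rw [iter_zero_aux]
      · simp
      · filter_upwards [Iio_mem_nhds hz] with y hy
        exact Real.smoothTransition.zero_of_nonpos (le_of_lt hy)
    · have : Real.smoothTransition =ᶠ[𝓝 z] (fun _ => (1:ℝ)) := by
        filter_upwards [Ioi_mem_nhds hz] with y hy
        exact Real.smoothTransition.one_of_one_le (le_of_lt hy)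
      rw [this.iteratedDeriv_eq, iteratedDeriv_const]
      split_ifs <;> simp

lemma sig_bound (n : ℕ) : ∃ D, 0 < D ∧
    ∀ i ≤ n, ∀ z, |iteratedDeriv i Real.smoothTransition z| ≤ D := by
  choose D hD using sig_bound_one
  have h0 : ∀ i, 0 ≤ D i := fun i => (abs_nonneg _).trans (hD i 0)
  refine ⟨∑ i ∈ Finset.range (n+1), D i + 1, ?_, fun i hi z => ?_⟩
  · have := Finset.sum_nonneg (s := Finset.range (n+1)) (fun i _ => h0 i)
    linarith
  · have := Finset.single_le_sum (f := D) (s := Finset.range (n+1)) (fun i _ => h0 i)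
      (Finset.mem_range.2 (Nat.lt_succ_of_le hi))
    linarith [hD i z]

/-- the cutoff -/
def chiC (z : ℝ) : ℝ := Real.smoothTransition (z + 1) - Real.smoothTransition z

lemma sig_smooth : ContDiff ℝ ∞ Real.smoothTransition := Real.smoothTransition.contDiff

lemma chiC_smooth : ContDiff ℝ ∞ chiC :=
  (sig_smooth.comp (contDiff_id.add contDiff_const)).sub sig_smooth

lemma chiC_zero (z : ℝ) (hz : z ∉ Set.Icc (-1:ℝ) 1) : chiC z = 0 := by
  rw [Set.mem_Icc, not_and_or, not_le, not_le] at hz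
  unfold chiC
  rcases hz with hz | hz
  · rw [Real.smoothTransition.zero_of_nonpos (by linarith),
      Real.smoothTransition.zero_of_nonpos (by linarith), sub_zero]
  · rw [Real.smoothTransition.one_of_one_le (by linarith),
      Real.smoothTransition.one_of_one_le (by linarith), sub_self]

lemma sig_shift_iter (i : ℕ) (c z : ℝ) :
    iteratedDeriv i (fun y => Real.smoothTransition (y + c)) z
      = iteratedDeriv i Real.smoothTransition (z + c) := by
  rw [iteratedDeriv_comp_add_const]

lemma sig_shift_smooth (c : ℝ) : ContDiff ℝ ∞ (fun y => Real.smoothTransition (y + c)) :=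
  sig_smooth.comp (contDiff_id.add contDiff_const)

lemma chiC_bound (n : ℕ) : ∃ D, 0 < D ∧ ∀ i ≤ n, ∀ z, |iteratedDeriv i chiC z| ≤ D := by
  obtain ⟨D, hD0, hD⟩ := sig_bound n
  refine ⟨D + D, by linarith, fun i hi z => ?_⟩
  have : iteratedDeriv i chiC z = iteratedDeriv i (fun y => Real.smoothTransition (y + 1)) z
      - iteratedDeriv i Real.smoothTransition z := by
    rw [← iteratedDeriv_sub]
    · rfl
    · exact (sig_shift_smooth 1).contDiffAt.of_le (mod_cast le_top)
    · exact sig_smooth.contDiffAt.of_le (mod_cast le_top)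
  rw [this, sig_shift_iter]
  exact (abs_sub _ _).trans (add_le_add (hD i hi _) (hD i hi _))

/-- tail multiplier -/
def tailC (N : ℝ) (z : ℝ) : ℝ :=
  1 - (Real.smoothTransition (z + (N + 1)) - Real.smoothTransition (z + (1 - N)))

lemma tailC_smooth (N : ℝ) : ContDiff ℝ ∞ (tailC N) :=
  contDiff_const.sub ((sig_shift_smooth _).sub (sig_shift_smooth _))

lemma tailC_bound (n : ℕ) : ∃ D, 0 < D ∧ ∀ i ≤ n, ∀ N z, |iteratedDeriv i (tailC N) z| ≤ D := by
  obtain ⟨D, hD0, hD⟩ := sig_bound n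
  refine ⟨1 + (D + D), by linarith, fun i hi N z => ?_⟩
  have : iteratedDeriv i (tailC N) z = iteratedDeriv i (fun _ => (1:ℝ)) z -
      (iteratedDeriv i (fun y => Real.smoothTransition (y + (N + 1))) z
      - iteratedDeriv i (fun y => Real.smoothTransition (y + (1 - N))) z) := by
    rw [← iteratedDeriv_sub, ← iteratedDeriv_sub]
    · rfl
    · exact contDiffAt_const
    · exact ((sig_shift_smooth _).sub (sig_shift_smooth _)).contDiffAt.of_le (mod_cast le_top)
    · exact (sig_shift_smooth _).contDiffAt.of_le (mod_cast le_top)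
    · exact (sig_shift_smooth _).contDiffAt.of_le (mod_cast le_top)
  rw [this, sig_shift_iter, sig_shift_iter]
  refine (abs_sub _ _).trans (add_le_add ?_ 
    ((abs_sub _ _).trans (add_le_add (hD i hi _) (hD i hi _))))
  rw [iteratedDeriv_const]
  split_ifs <;> simp

lemma tailC_zero (N z : ℝ) (h : |z| < N - 1) (i : ℕ) : iteratedDeriv i (tailC N) z = 0 := by
  apply iter_zero_aux
  have : {y : ℝ | |y| < N - 1} ∈ 𝓝 z := (isOpen_lt continuous_abs continuous_const).mem_nhds h
  filter_upwards [this] with y hy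
  have hy' := abs_lt.1 (show |y| < N - 1 from hy)
  unfold tailC
  rw [Real.smoothTransition.one_of_one_le (by linarith),
      Real.smoothTransition.zero_of_nonpos (by linarith)]
  ring

lemma tail_tendsto (g : SchwartzMap ℝ ℝ) (Ψ : ℕ → SchwartzMap ℝ ℝ)
    (hΨ : ∀ N : ℕ, ∀ y, g y - Ψ N y = tailC N y * g y) :
    Filter.Tendsto Ψ Filter.atTop (𝓝 g) := by
  rw [(schwartz_withSeminorms ℝ ℝ ℝ).tendsto_nhds]
  rintro ⟨k, n⟩ ε hε
  obtain ⟨D, hD0, hD⟩ := tailC_bound n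
  set Q : ℝ := ∑ i ∈ Finset.range (n+1), SchwartzMap.seminorm ℝ (k+1) i g with hQ
  have hQ0 : 0 ≤ Q := Finset.sum_nonneg fun i _ => apply_nonneg _ _
  have hlim : Filter.Tendsto (fun N : ℕ => 2 ^ n * (D * Q) / ((N:ℝ) - 1)) Filter.atTop (𝓝 0) := by
    apply Filter.Tendsto.const_div_atTop
    exact Filter.tendsto_atTop_add_const_right _ _ tendsto_natCast_atTop_atTop
  filter_upwards [hlim.eventually_lt_const hε, Filter.eventually_ge_atTop 2] with N hN hN2
  refine lt_of_le_of_lt ?_ hN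
  have hN1 : (0:ℝ) < N - 1 := by
    have : (2:ℝ) ≤ N := by exact_mod_cast hN2
    linarith
  show SchwartzMap.seminorm ℝ k n (Ψ N - g) ≤ _
  rw [map_sub_rev]
  refine SchwartzMap.seminorm_le_bound' ℝ k n _ (by positivity) fun y => ?_
  have heq : ((g - Ψ N : SchwartzMap ℝ ℝ) : ℝ → ℝ) = fun y => tailC N y * g y := by
    funext y; rw [← hΨ]; rfl
  rw [heq, Real.norm_eq_abs]
  by_cases hy : |y| < N - 1
  · have := leib_aux n (tailC N) g (tailC_smooth _) (g.smooth _) y 0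
      (∑ i ∈ Finset.range (n+1), |iteratedDeriv i g y|)
      (fun i _ => by rw [tailC_zero _ _ hy]; simp)
      (fun i hi => Finset.single_le_sum (f := fun i => |iteratedDeriv i g y|)
        (fun i _ => abs_nonneg _) (Finset.mem_range.2 (Nat.lt_succ_of_le hi)))
    have h0 : |iteratedDeriv n (fun y => tailC N y * g y) y| = 0 :=
      le_antisymm (by simpa using this) (abs_nonneg _)
    rw [h0, mul_zero]
    positivity
  · push Not at hy
    have := leib_aux n (tailC N) g (tailC_smooth _) (g.smooth _) y D
      (∑ i ∈ Finset.range (n+1), |iteratedDeriv i g y|)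
      (fun i hi => hD i hi _ _)
      (fun i hi => Finset.single_le_sum (f := fun i => |iteratedDeriv i g y|)
        (fun i _ => abs_nonneg _) (Finset.mem_range.2 (Nat.lt_succ_of_le hi)))
    rw [le_div_iff₀ hN1]
    have hq : |y| ^ (k+1) * (∑ i ∈ Finset.range (n+1), |iteratedDeriv i g y|) ≤ Q := by
      rw [Finset.mul_sum]
      exact Finset.sum_le_sum fun i _ => SchwartzMap.le_seminorm' ℝ (k+1) i g y
    calc |y| ^ k * |iteratedDeriv n (fun y => tailC N y * g y) y| * (N - 1)
        ≤ |y| ^ k * (2 ^ n * (D * (∑ i ∈ Finset.range (n+1), |iteratedDeriv i g y|))) * |y| := by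
          gcongr
      _ = 2 ^ n * (D * (|y| ^ (k+1) * (∑ i ∈ Finset.range (n+1), |iteratedDeriv i g y|))) := by
          ring
      _ ≤ _ := by gcongr

lemma piece_aux (r : ℕ) : ∃ K, 0 < K ∧ ∀ v : SchwartzMap ℝ ℝ →L[ℝ] ℝ, ∀ B : ℝ,
    (∀ c φ, IsTestFunction r φ → ∀ Φ : SchwartzMap ℝ ℝ, (∀ y, Φ y = φ (y - c)) → |v Φ| ≤ B) →
    ∀ g : SchwartzMap ℝ ℝ, ∀ A : ℝ, 0 < A →
    (∀ j ≤ r, ∀ w, (1 + w ^ 2) * |iteratedDeriv j g w| ≤ A) →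
    ∀ c : ℝ, ∃ Φ : SchwartzMap ℝ ℝ, (∀ y, Φ y = chiC (y - c) * g y) ∧
      |v Φ| ≤ K * A * B * (1 + c ^ 2)⁻¹ := by
  obtain ⟨D, hD0, hD⟩ := chiC_bound r
  refine ⟨2 ^ r * (D * 3), by positivity, fun v B hv g A hA hg c => ?_⟩
  set s : ℝ := 2 ^ r * (D * 3) * A * (1 + c ^ 2)⁻¹ with hs
  have hs0 : 0 < s := by positivity
  set g' : ℝ → ℝ := fun z => g (z + c) with hg'
  have hg's : ContDiff ℝ ∞ g' := (g.smooth _).comp (contDiff_id.add contDiff_const)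
  set φ : ℝ → ℝ := fun z => s⁻¹ * (chiC z * g' z) with hφ
  have hφs : ContDiff ℝ ∞ φ := contDiff_const.mul (chiC_smooth.mul hg's)
  have hφ0 : ∀ y : ℝ, y ∉ Set.Icc (-1 : ℝ) 1 → φ y = 0 := fun y hy => by
    simp [hφ, chiC_zero y hy]
  have htest : IsTestFunction r φ := by
    refine ⟨hφs, hφ0, fun j hj y => ?_⟩
    by_cases hy : y ∈ Set.Icc (-1:ℝ) 1
    · rw [hφ, iteratedDeriv_const_mul_field, abs_mul, abs_of_pos (inv_pos.2 hs0),
        inv_mul_le_iff₀ hs0, mul_one]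
      have hE : ∀ i ≤ j, |iteratedDeriv i g' y| ≤ 3 * A * (1 + c ^ 2)⁻¹ := by
        intro i hi
        rw [hg', iteratedDeriv_comp_add_const]
        have h1 := hg i (hi.trans hj) (y + c)
        have h2 : 1 + c ^ 2 ≤ 3 * (1 + (y + c) ^ 2) := by
          nlinarith [sq_nonneg (y + c + y), hy.1, hy.2]
        rw [← div_eq_mul_inv, le_div_iff₀ (by positivity)]
        calc _ ≤ |iteratedDeriv i g (y + c)| * (3 * (1 + (y + c) ^ 2)) := by gcongr
          _ = 3 * ((1 + (y + c) ^ 2) * |iteratedDeriv i g (y + c)|) := by ring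
          _ ≤ _ := by linarith
      refine (leib_aux j chiC g' chiC_smooth hg's y D _ (fun i hi => hD i (hi.trans hj) y) hE).trans ?_
      have : (2:ℝ) ^ j ≤ 2 ^ r := pow_le_pow_right₀ (by norm_num) hj
      calc _ ≤ 2 ^ r * (D * (3 * A * (1 + c ^ 2)⁻¹)) := by gcongr
        _ = s := by rw [hs]; ring
    · rw [iter_zero_aux]
      · simp
      · filter_upwards [isClosed_Icc.isOpen_compl.mem_nhds hy] with z hz
        exact hφ0 z hz
  set f : ℝ → ℝ := fun y => φ (y - c) with hf
  have hfs : ContDiff ℝ ∞ f := hφs.comp (contDiff_id.sub contDiff_const)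
  have hfc : HasCompactSupport f := by
    apply HasCompactSupport.intro (isCompact_Icc (a := c - 1) (b := c + 1))
    intro y hy
    apply hφ0
    intro h
    exact hy ⟨by linarith [h.1], by linarith [h.2]⟩
  have h1 := hv c φ htest (hfc.toSchwartzMap hfs) (fun y => rfl)
  refine ⟨s • hfc.toSchwartzMap hfs, fun y => ?_, ?_⟩
  · show s * (s⁻¹ * (chiC (y - c) * g (y - c + c))) = _
    rw [sub_add_cancel, mul_inv_cancel_left₀ hs0.ne']
  · rw [map_smul, smul_eq_mul, abs_mul, abs_of_pos hs0]
    calc _ ≤ s * B := by gcongr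
      _ = _ := by rw [hs]; ring

lemma profile_bound (r : ℕ) : ∃ K, 0 < K ∧ ∀ v : SchwartzMap ℝ ℝ →L[ℝ] ℝ, ∀ B : ℝ, 0 ≤ B →
    (∀ c φ, IsTestFunction r φ → ∀ Φ : SchwartzMap ℝ ℝ, (∀ y, Φ y = φ (y - c)) → |v Φ| ≤ B) →
    ∀ g : SchwartzMap ℝ ℝ, ∀ A : ℝ, 0 < A →
    (∀ j ≤ r, ∀ w, (1 + w ^ 2) * |iteratedDeriv j g w| ≤ A) →
    |v g| ≤ K * A * B := by
  obtain ⟨K, hK, h⟩ := piece_aux r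
  have hsum : Summable (fun i : ℕ => (1 + (i:ℝ) ^ 2)⁻¹) := by
    refine Summable.of_nonneg_of_le (fun i => by positivity) (fun i => ?_)
      ((summable_nat_add_iff 1).2 (Real.summable_one_div_nat_pow (p := 2).2 (by norm_num)) |>.mul_left 2)
    push_cast
    rw [mul_one_div, inv_eq_one_div, div_le_div_iff₀ (by positivity) (by positivity)]
    nlinarith [sq_nonneg ((i:ℝ) - 1)]
  set S := ∑' i : ℕ, (1 + (i:ℝ) ^ 2)⁻¹ with hS
  have hS0 : 0 ≤ S := tsum_nonneg fun i => by positivity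
  refine ⟨K * (2 * S) + 1, by positivity, fun v B hB hv g A hA hg => ?_⟩
  choose Φ hΦ hΦv using h v B hv g A hA hg
  set Ψ : ℕ → SchwartzMap ℝ ℝ := fun N => ∑ i ∈ Finset.range N, (Φ i + Φ (-(i + 1))) with hΨ
  have hlim : Filter.Tendsto Ψ Filter.atTop (𝓝 g) := by
    apply tail_tendsto
    intro N
    induction N with
    | zero => intro y; simp [hΨ, tailC]
    | succ N ih =>
      intro y
      have h1 : Ψ (N+1) y = Ψ N y + (Φ N y + Φ (-(N+1)) y) := by
        simp only [hΨ]
        rw [Finset.sum_range_succ]; rfl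
      have h2 : g y - Ψ (N+1) y = (g y - Ψ N y) - (Φ N y + Φ (-(N+1)) y) := by rw [h1]; ring
      rw [h2, ih y, hΦ, hΦ]
      simp only [tailC, chiC]
      push_cast
      have e1 : y - (N:ℝ) + 1 = y + (1 - N) := by ring
      have e2 : y - (N:ℝ) = y + (1 - (N + 1)) := by ring
      have e3 : y - (-((N:ℝ) + 1)) + 1 = y + (N + 1 + 1) := by ring
      have e4 : y - (-((N:ℝ) + 1)) = y + (N + 1) := by ring
      rw [e1, e3, e4, e2]
      ring
  have hv' : Filter.Tendsto (fun N => |v (Ψ N)|) Filter.atTop (𝓝 |v g|) :=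
    ((v.continuous.tendsto g).comp hlim).abs
  refine le_of_tendsto' hv' fun N => ?_
  simp only [hΨ, map_sum]
  calc _ ≤ ∑ i ∈ Finset.range N, |v (Φ i + Φ (-(i + 1)))| := Finset.abs_sum_le_sum_abs _ _
    _ ≤ ∑ i ∈ Finset.range N, (K * A * B * 2) * (1 + (i:ℝ) ^ 2)⁻¹ := by
        refine Finset.sum_le_sum fun i _ => ?_
        rw [map_add]
        refine (abs_add_le _ _).trans ?_
        have h1 := hΦv i
        have h2 := hΦv (-(i + 1))
        have h3 : (1 + (-((i:ℝ) + 1)) ^ 2)⁻¹ ≤ (1 + (i:ℝ) ^ 2)⁻¹ := by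
          gcongr 1
          have : (0:ℝ) ≤ i := by positivity
          nlinarith
        have h4 : K * A * B * (1 + (-((i:ℝ) + 1)) ^ 2)⁻¹ ≤ K * A * B * (1 + (i:ℝ) ^ 2)⁻¹ := by
          gcongr
        linarith
    _ = (K * A * B * 2) * ∑ i ∈ Finset.range N, (1 + (i:ℝ) ^ 2)⁻¹ := by rw [Finset.mul_sum]
    _ ≤ (K * A * B * 2) * S := by
        gcongr
        exact hsum.sum_le_tsum _ (fun i _ => by positivity)
    _ ≤ _ := by
        have : 0 ≤ A * B := by positivity
        nlinarith

lemma schwartz_decay3 (G : SchwartzMap ℝ ℝ) (n : ℕ) : ∃ E, 0 < E ∧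
    ∀ j ≤ n, ∀ y, (1 + |y|) ^ 3 * |iteratedDeriv j G y| ≤ E := by
  set q : ℕ → ℝ := fun j => SchwartzMap.seminorm ℝ 0 j G + 3 * SchwartzMap.seminorm ℝ 1 j G
    + 3 * SchwartzMap.seminorm ℝ 2 j G + SchwartzMap.seminorm ℝ 3 j G with hq
  have hq0 : ∀ j, 0 ≤ q j := fun j => by simp only [hq]; positivity
  refine ⟨∑ j ∈ Finset.range (n+1), q j + 1, ?_, fun j hj y => ?_⟩
  · have := Finset.sum_nonneg (s := Finset.range (n+1)) (fun i _ => hq0 i)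
    linarith
  · have h := Finset.single_le_sum (f := q) (s := Finset.range (n+1)) (fun i _ => hq0 i)
      (Finset.mem_range.2 (Nat.lt_succ_of_le hj))
    have h0 := SchwartzMap.le_seminorm' ℝ 0 j G y
    have h1 := SchwartzMap.le_seminorm' ℝ 1 j G y
    have h2 := SchwartzMap.le_seminorm' ℝ 2 j G y
    have h3 := SchwartzMap.le_seminorm' ℝ 3 j G y
    rw [Real.norm_eq_abs] at h0 h1 h2 h3
    have : (1 + |y|) ^ 3 * |iteratedDeriv j G y| = |y| ^ 0 * |iteratedDeriv j G y|
      + 3 * (|y| ^ 1 * |iteratedDeriv j G y|) + 3 * (|y| ^ 2 * |iteratedDeriv j G y|)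
      + |y| ^ 3 * |iteratedDeriv j G y| := by ring
    rw [this]
    simp only [hq] at h
    linarith

lemma schwartz_iter_hasDeriv (G : SchwartzMap ℝ ℝ) (j : ℕ) (y : ℝ) :
    HasDerivAt (iteratedDeriv j G) (iteratedDeriv (j+1) G y) y := by
  rw [iteratedDeriv_succ]
  have : Differentiable ℝ (iteratedDeriv j G) :=
    (G.smooth ⊤).differentiable_iteratedDeriv j (mod_cast WithTop.coe_lt_top j)
  exact (this y).hasDerivAt

lemma iter_scaled (G : SchwartzMap ℝ ℝ) (j : ℕ) (μ h w : ℝ) :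
    iteratedDeriv j (fun w => μ * G (μ * (w - h))) w
      = μ ^ (j+1) * iteratedDeriv j G (μ * (w - h)) := by
  rw [iteratedDeriv_const_mul_field]
  have h1 : iteratedDeriv j (fun w => G (μ * (w - h))) w
      = iteratedDeriv j (fun z => G (μ * z)) (w - h) := by
    rw [iteratedDeriv_comp_sub_const j (fun z => G (μ * z)) h]
  rw [h1, iteratedDeriv_comp_const_mul ((G.smooth j)) μ]
  simp only
  ring

lemma weight_aux (μ0 μ h w : ℝ) (hμ0 : 0 < μ0) (hμ : μ ∈ Set.Icc μ0 1) (hh : |h| ≤ 1) :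
    (1 + w ^ 2) ≤ 3 * (μ0⁻¹) ^ 2 * (1 + |μ * (w - h)|) ^ 2 := by
  have hh' := abs_le.1 hh
  have h1 : 1 + w ^ 2 ≤ 3 * (1 + (w - h) ^ 2) := by
    nlinarith [sq_nonneg (w - h - h)]
  have h2 : μ0 ^ 2 * (1 + (w - h) ^ 2) ≤ (1 + |μ * (w - h)|) ^ 2 := by
    have e : (1 + |μ * (w - h)|) ^ 2 = 1 + 2 * |μ * (w - h)| + μ ^ 2 * (w - h) ^ 2 := by
      rw [add_sq, sq_abs]; ring
    rw [e]
    have a1 : μ0 ^ 2 ≤ μ ^ 2 := by have := hμ.1; gcongr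
    have a2 : μ0 ^ 2 ≤ 1 := by have := hμ.1.trans hμ.2; exact pow_le_one₀ hμ0.le this
    have := abs_nonneg (μ * (w - h))
    nlinarith [sq_nonneg (w - h)]
  calc _ ≤ 3 * (1 + (w - h) ^ 2) := h1
    _ = 3 * (μ0⁻¹) ^ 2 * (μ0 ^ 2 * (1 + (w - h) ^ 2)) := by field_simp
    _ ≤ _ := by gcongr

lemma pt_bound (G : SchwartzMap ℝ ℝ) (E μ0 μ h w : ℝ) (j : ℕ) (hμ0 : 0 < μ0)
    (hμ : μ ∈ Set.Icc μ0 1) (hh : |h| ≤ 1) 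
    (hE : ∀ y, (1 + |y|) ^ 3 * |iteratedDeriv j G y| ≤ E) :
    (1 + w ^ 2) * ((1 + |μ * (w - h)|) * |iteratedDeriv j G (μ * (w - h))|)
      ≤ 3 * (μ0⁻¹) ^ 2 * E := by
  have h1 := weight_aux μ0 μ h w hμ0 hμ hh
  calc _ ≤ 3 * (μ0⁻¹) ^ 2 * (1 + |μ * (w - h)|) ^ 2 * 
        ((1 + |μ * (w - h)|) * |iteratedDeriv j G (μ * (w - h))|) := by gcongr
    _ = 3 * (μ0⁻¹) ^ 2 * ((1 + |μ * (w - h)|) ^ 3 * |iteratedDeriv j G (μ * (w - h))|) := by ring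
    _ ≤ _ := by gcongr; exact hE _

lemma scaled_bounds (G : SchwartzMap ℝ ℝ) (r : ℕ) (μ0 : ℝ) (hμ0 : 0 < μ0) : ∃ A, 0 < A ∧
    (∀ μ ∈ Set.Icc μ0 1, ∀ h, |h| ≤ 1 → ∀ j ≤ r, ∀ w,
      (1 + w ^ 2) * |μ ^ (j+1) * iteratedDeriv j G (μ * (w - h))| ≤ A) ∧
    (∀ μ ∈ Set.Icc μ0 1, ∀ h, |h| ≤ 1 → ∀ j ≤ r, ∀ w,
      (1 + w ^ 2) * |μ ^ (j+1) * iteratedDeriv j G (μ * (w - h))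
        - μ ^ (j+1) * iteratedDeriv j G (μ * (w - 0))| ≤ A * |h|) ∧
    (∀ μ ∈ Set.Icc μ0 1, ∀ ν ∈ Set.Icc μ0 1, ∀ j ≤ r, ∀ w,
      (1 + w ^ 2) * |ν ^ (j+1) * iteratedDeriv j G (ν * (w - 0))
        - μ ^ (j+1) * iteratedDeriv j G (μ * (w - 0))| ≤ A * |ν - μ|) := by
  obtain ⟨E, hE0, hE⟩ := schwartz_decay3 G (r+1)
  set L : ℝ := 3 * (μ0⁻¹) ^ 2 * E with hL
  have hL0 : 0 < L := by positivity
  have key : ∀ μ ∈ Set.Icc μ0 1, ∀ h, |h| ≤ 1 → ∀ j ≤ r + 1, ∀ w,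
      (1 + w ^ 2) * |iteratedDeriv j G (μ * (w - h))| ≤ L := by
    intro μ hμ h hh j hj w
    refine le_trans ?_ (pt_bound G E μ0 μ h w j hμ0 hμ hh (hE j hj))
    gcongr
    exact le_mul_of_one_le_left (abs_nonneg _) (by linarith [abs_nonneg (μ * (w - h))])
  have pw : ∀ μ ∈ Set.Icc μ0 1, ∀ k : ℕ, |μ ^ k| ≤ 1 := by
    intro μ hμ k
    have h0 : 0 ≤ μ := hμ0.le.trans hμ.1
    rw [abs_of_nonneg (by positivity)]
    exact pow_le_one₀ h0 hμ.2
  have key' : ∀ μ ∈ Set.Icc μ0 1, ∀ h, |h| ≤ 1 → ∀ j ≤ r + 1, ∀ w, ∀ k : ℕ,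
      (1 + w ^ 2) * |μ ^ k * iteratedDeriv j G (μ * (w - h))| ≤ L := by
    intro μ hμ h hh j hj w k
    refine le_trans (mul_le_mul_of_nonneg_left ?_ (by positivity)) (key μ hμ h hh j hj w)
    rw [abs_mul]
    exact mul_le_of_le_one_left (abs_nonneg _) (pw μ hμ k)
  refine ⟨L * (r + 1) + L * μ0⁻¹ + L, by positivity, ?_, ?_, ?_⟩
  · intro μ hμ h hh j hj w
    refine (key' μ hμ h hh j (by omega) w (j+1)).trans ?_
    have : 0 ≤ L * (r + 1) + L * μ0⁻¹ := by positivity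
    linarith
  · intro μ hμ h hh j hj w
    have hw : 0 < 1 + w ^ 2 := by positivity
    have hmv := Convex.norm_image_sub_le_of_norm_hasDerivWithin_le
      (f := fun h => μ ^ (j+1) * iteratedDeriv j G (μ * (w - h)))
      (f' := fun h => μ ^ (j+1) * (iteratedDeriv (j+1) G (μ * (w - h)) * (μ * (-1))))
      (C := L / (1 + w ^ 2)) (s := Set.Icc (-1:ℝ) 1) (x := 0) (y := h)
      (fun a _ => by
        have := (((hasDerivAt_id a).const_sub w).const_mul μ)
        exact (((schwartz_iter_hasDeriv G j (μ * (w - a))).comp a this).const_mul _).hasDerivWithinAt)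
      (fun a ha => by
        rw [le_div_iff₀ hw, Real.norm_eq_abs, mul_comm]
        have := key' μ hμ a (abs_le.2 ha) (j+1) (by omega) w (j+2)
        refine le_trans (le_of_eq ?_) this
        rw [← abs_neg]; congr 2; ring)
      (convex_Icc _ _) (by simp) (abs_le.1 hh)
    rw [Real.norm_eq_abs, Real.norm_eq_abs, sub_zero h, div_mul_eq_mul_div, le_div_iff₀ hw, mul_comm] at hmv
    refine hmv.trans ?_
    have : 0 ≤ L * (r + 1) + L * μ0⁻¹ := by positivity
    gcongr
    linarith
  · intro μ hμ ν hν j hj w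
    have hw : 0 < 1 + w ^ 2 := by positivity
    have hmv := Convex.norm_image_sub_le_of_norm_hasDerivWithin_le
      (f := fun m => m ^ (j+1) * iteratedDeriv j G (m * (w - 0)))
      (f' := fun m => (((j+1 : ℕ) : ℝ) * m ^ j) * iteratedDeriv j G (m * (w - 0)) +
        m ^ (j+1) * (iteratedDeriv (j+1) G (m * (w - 0)) * (1 * (w - 0))))
      (C := (L * (r + 1) + L * μ0⁻¹ + L) / (1 + w ^ 2)) (s := Set.Icc μ0 1) (x := μ) (y := ν)
      (fun a _ => by
        have h1 := (((hasDerivAt_id a).mul_const (w - 0)))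
        have h2 := (schwartz_iter_hasDeriv G j (a * (w - 0))).comp a h1
        exact ((hasDerivAt_pow (j+1) a).mul h2).hasDerivWithinAt)
      (fun a ha => by
        rw [le_div_iff₀ hw, Real.norm_eq_abs, mul_comm]
        have ha0 : 0 < a := hμ0.trans_le ha.1
        have k1 := key' a ha 0 (by simp) j (by omega) w j
        have k2 := pt_bound G E μ0 a 0 w (j+1) hμ0 ha (by simp) (hE (j+1) (by omega))
        have hx : |w - 0| ≤ μ0⁻¹ * (1 + |a * (w - 0)|) := by
          rw [abs_mul, abs_of_pos ha0, inv_mul_eq_div, le_div_iff₀ hμ0]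
          have := mul_le_mul_of_nonneg_right ha.1 (abs_nonneg (w - 0))
          nlinarith
        have hj' : (j:ℝ) ≤ r := by exact_mod_cast hj
        calc _ ≤ (1 + w ^ 2) * (((j+1 : ℕ) : ℝ) * |a ^ j * iteratedDeriv j G (a * (w - 0))|
              + |a ^ (j+1)| * (|iteratedDeriv (j+1) G (a * (w - 0))| * |w - 0|)) := by
              gcongr
              refine (abs_add_le _ _).trans (le_of_eq ?_)
              rw [one_mul, mul_assoc, abs_mul, Nat.abs_cast, abs_mul (a ^ (j+1)),
                abs_mul (iteratedDeriv (j+1) G (a * (w - 0)))]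
          _ ≤ (1 + w ^ 2) * (((j+1 : ℕ) : ℝ) * |a ^ j * iteratedDeriv j G (a * (w - 0))|
              + 1 * (|iteratedDeriv (j+1) G (a * (w - 0))| * (μ0⁻¹ * (1 + |a * (w - 0)|)))) := by
              gcongr
              exact pw a ha _
          _ = ((j+1 : ℕ) : ℝ) * ((1 + w ^ 2) * |a ^ j * iteratedDeriv j G (a * (w - 0))|)
              + μ0⁻¹ * ((1 + w ^ 2) * ((1 + |a * (w - 0)|) * |iteratedDeriv (j+1) G (a * (w - 0))|)) := by
              ring
          _ ≤ ((j+1 : ℕ) : ℝ) * L + μ0⁻¹ * L := by gcongr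
          _ ≤ _ := by
              push_cast
              nlinarith)
      (convex_Icc _ _) hμ hν
    rw [Real.norm_eq_abs, Real.norm_eq_abs, div_mul_eq_mul_div, le_div_iff₀ hw, mul_comm] at hmv
    exact hmv

lemma heat_rescale (l t w : ℝ) (hl : 0 < l) (ht : 0 < t) :
    heatKernel (l ^ 2 * t) (l * w) = l⁻¹ * heatKernel t w := by
  have h1 : 0 < l ^ 2 * t := by positivity
  unfold heatKernel
  rw [if_pos h1, if_pos ht, ← mul_assoc l⁻¹]
  refine congrArg₂ (· * ·) ?_ ?_
  · rw [show 4 * Real.pi * (l ^ 2 * t) = l ^ 2 * (4 * Real.pi * t) by ring,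
      Real.mul_rpow (by positivity) (by positivity)]
    congr 1
    rw [← Real.rpow_natCast, ← Real.rpow_mul hl.le]
    norm_num
    rw [Real.rpow_neg_one]
  · congr 1
    field_simp

lemma heat_profile (PK : ℝ → ℝ → SchwartzMap ℝ ℝ)
    (hPK : ∀ t x y : ℝ, PK t x y = heatKernel t (x - y)) (t h : ℝ) (ht : 0 < t) :
    (PK t h : ℝ → ℝ) = fun w => (√t)⁻¹ * PK 1 0 ((√t)⁻¹ * (w - h)) := by
  funext w
  have hs : 0 < √t := Real.sqrt_pos.2 ht
  have := heat_rescale (√t) 1 ((√t)⁻¹ * (h - w)) hs one_pos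
  rw [Real.sq_sqrt ht.le, mul_one, mul_inv_cancel_left₀ hs.ne'] at this
  rw [hPK, hPK, this]
  congr 2
  ring

lemma inv_sqrt_lip (a b : ℝ) (ha : 1 ≤ a) (hb : 1 ≤ b) : |(√b)⁻¹ - (√a)⁻¹| ≤ |b - a| := by
  have h1 : 1 ≤ √a := by rwa [Real.one_le_sqrt]
  have h2 : 1 ≤ √b := by rwa [Real.one_le_sqrt]
  have e : b - a = -((√b)⁻¹ - (√a)⁻¹) * (√a * √b * (√a + √b)) := by
    have p : √a ≠ 0 := by positivity
    have q : √b ≠ 0 := by positivity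
    field_simp
    nlinarith [Real.sq_sqrt (show 0 ≤ a by linarith), Real.sq_sqrt (show 0 ≤ b by linarith)]
  rw [e, abs_mul, abs_neg]
  apply le_mul_of_one_le_right (abs_nonneg _)
  refine le_trans ?_ (le_abs_self _)
  have : 1 ≤ √a * √b := one_le_mul_of_one_le_of_one_le h1 h2
  nlinarith

lemma heat_bounds (PK : ℝ → ℝ → SchwartzMap ℝ ℝ)
    (hPK : ∀ t x y : ℝ, PK t x y = heatKernel t (x - y)) (r : ℕ) (T0 : ℝ) (hT0 : 1 ≤ T0) :
    ∃ A, 0 < A ∧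
    (∀ t ∈ Set.Icc 1 T0, ∀ j ≤ r, ∀ w, (1 + w ^ 2) * |iteratedDeriv j (PK t 0) w| ≤ A) ∧
    (∀ t ∈ Set.Icc 1 T0, ∀ h, |h| ≤ 1 → ∀ j ≤ r, ∀ w,
      (1 + w ^ 2) * |iteratedDeriv j (PK t h - PK t 0 : SchwartzMap ℝ ℝ) w| ≤ A * |h|) ∧
    (∀ t ∈ Set.Icc 1 T0, ∀ s ∈ Set.Icc 1 T0, ∀ j ≤ r, ∀ w,
      (1 + w ^ 2) * |iteratedDeriv j (PK s 0 - PK t 0 : SchwartzMap ℝ ℝ) w| ≤ A * |s - t|) := by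
  have hT0' : 0 < √T0 := Real.sqrt_pos.2 (by linarith)
  obtain ⟨A, hA, h1, h2, h3⟩ := scaled_bounds (PK 1 0) r (√T0)⁻¹ (by positivity)
  have hmem : ∀ t ∈ Set.Icc 1 T0, (√t)⁻¹ ∈ Set.Icc (√T0)⁻¹ 1 := by
    intro t ht
    have : 1 ≤ √t := by rw [Real.one_le_sqrt]; exact ht.1
    refine ⟨?_, inv_le_one_of_one_le₀ this⟩
    have h4 : √t ≤ √T0 := Real.sqrt_le_sqrt ht.2
    gcongr
  have hit : ∀ t ∈ Set.Icc 1 T0, ∀ h j w, iteratedDeriv j (PK t h) w =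
      (√t)⁻¹ ^ (j+1) * iteratedDeriv j (PK 1 0) ((√t)⁻¹ * (w - h)) := by
    intro t ht h j w
    rw [heat_profile PK hPK t h (by linarith [ht.1]), iter_scaled]
  have hsub : ∀ (f g : SchwartzMap ℝ ℝ) j w, iteratedDeriv j (f - g : SchwartzMap ℝ ℝ) w =
      iteratedDeriv j f w - iteratedDeriv j g w := by
    intro f g j w
    rw [← iteratedDeriv_sub (f.smooth _).contDiffAt (g.smooth _).contDiffAt]
    rfl
  refine ⟨A, hA, ?_, ?_, ?_⟩
  · intro t ht j hj w
    rw [hit t ht]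
    exact h1 _ (hmem t ht) 0 (by simp) j hj w
  · intro t ht h hh j hj w
    rw [hsub, hit t ht, hit t ht]
    exact h2 _ (hmem t ht) h hh j hj w
  · intro t ht s hs j hj w
    rw [hsub, hit t ht, hit s hs]
    exact (h3 _ (hmem t ht) _ (hmem s hs) j hj w).trans
      (mul_le_mul_of_nonneg_left (inv_sqrt_lip t s ht.1 hs.1) hA.le)

lemma rescale_clm (l x : ℝ) (hl : 0 < l) : ∃ L : SchwartzMap ℝ ℝ →L[ℝ] SchwartzMap ℝ ℝ,
    ∀ g y, L g y = l⁻¹ * g (l⁻¹ * (y - x)) := by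
  have hg : (fun y : ℝ => l⁻¹ * (y - x)).HasTemperateGrowth := by fun_prop
  have ha : AntilipschitzWith (⟨l, hl.le⟩ : NNReal) (fun y : ℝ => l⁻¹ * (y - x)) := by
    apply AntilipschitzWith.of_le_mul_dist
    intro a b
    simp only [Real.dist_eq]
    rw [show l⁻¹ * (a - x) - l⁻¹ * (b - x) = l⁻¹ * (a - b) by ring, abs_mul,
      abs_of_pos (inv_pos.2 hl)]
    apply le_of_eq
    show _ = l * _
    field_simp
  exact ⟨l⁻¹ • SchwartzMap.compCLMOfAntilipschitz ℝ hg ha, fun g y => rfl⟩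

lemma tnorm_facts (t T : ℝ) (ht : 0 < t) (htT : t ≤ T) :
    0 < tnorm t ∧ tnorm t ≤ 1 ∧ ∃ τ, 1 ≤ τ ∧ τ ≤ max T 1 ∧ t = tnorm t ^ 2 * τ := by
  have hs : 0 < √t := Real.sqrt_pos.2 ht
  unfold tnorm
  rw [abs_of_pos ht]
  refine ⟨lt_min hs one_pos, min_le_right _ _, ?_⟩
  rcases le_total (√t) 1 with h | h
  · refine ⟨1, le_rfl, le_max_right _ _, ?_⟩
    rw [min_eq_left h, Real.sq_sqrt ht.le, mul_one]
  · refine ⟨t, by rwa [Real.one_le_sqrt] at h, htT.trans (le_max_left _ _), ?_⟩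
    rw [min_eq_right h]; ring

lemma tnorm_mono (t s : ℝ) (ht : 0 < t) (hts : t ≤ s) : tnorm t ≤ tnorm s := by
  unfold tnorm
  rw [abs_of_pos ht, abs_of_pos (ht.trans_le hts)]
  exact min_le_min_right _ (Real.sqrt_le_sqrt hts)

lemma tnorm2_symm (t s : ℝ) : tnorm2 t s = tnorm2 s t := min_comm _ _

lemma core_bounds (η : ℝ) (r : ℕ) (T γ : ℝ) (hγ : γ ∈ Set.Ioo (0 : ℝ) 1)
    (PK : ℝ → ℝ → SchwartzMap ℝ ℝ) (hPK : ∀ t x y : ℝ, PK t x y = heatKernel t (x - y)) :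
    ∃ C : ℝ, 0 < C ∧
      ∀ u₀ : SchwartzMap ℝ ℝ →L[ℝ] ℝ,
        ∀ M : ℝ, 0 ≤ M →
        (∀ x lam : ℝ, lam ∈ Set.Ioc (0 : ℝ) 1 →
          ∀ φ : ℝ → ℝ, IsTestFunction r φ →
          ∀ Φ : SchwartzMap ℝ ℝ, (∀ y : ℝ, Φ y = lam⁻¹ * φ (lam⁻¹ * (y - x))) →
          lam ^ (-η) * |u₀ Φ| ≤ M) →
        (∀ t x : ℝ, t ∈ Set.Ioc (0 : ℝ) T →
          |u₀ (PK t x)| ≤ C * M * tnorm t ^ η) ∧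
        (∀ t x xb : ℝ, t ∈ Set.Ioc (0 : ℝ) T → |xb - x| ≤ tnorm t → x ≠ xb →
          |u₀ (PK t xb) - u₀ (PK t x)| ≤
            C * M * (tnorm t ^ (η - γ) * |xb - x| ^ γ)) ∧
        (∀ x t tb : ℝ, 0 < t → t < tb → tb ≤ T → tb - t ≤ tnorm t ^ 2 →
          |u₀ (PK tb x) - u₀ (PK t x)| ≤
            C * M * (tnorm t ^ (η - γ) * (tb - t) ^ (γ / 2))) := by
  obtain ⟨K, hK, hprof⟩ := profile_bound r
  obtain ⟨A, hA, hA1, hA2, hA3⟩ := heat_bounds PK hPK r (max T 1 + 1)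
    (by linarith [le_max_right T 1])
  refine ⟨K * A, by positivity, fun u₀ M hM hu => ?_⟩
  have main : ∀ l x : ℝ, l ∈ Set.Ioc (0:ℝ) 1 → ∃ v : SchwartzMap ℝ ℝ →L[ℝ] ℝ,
      (∀ τ h, 0 < τ → v (PK τ h) = u₀ (PK (l ^ 2 * τ) (x + l * h))) ∧
      ∀ g : SchwartzMap ℝ ℝ, ∀ A : ℝ, 0 < A →
      (∀ j ≤ r, ∀ w, (1 + w ^ 2) * |iteratedDeriv j g w| ≤ A) →
      |v g| ≤ K * A * (M * l ^ η) := by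
    intro l x hl
    have hl0 := hl.1
    obtain ⟨L, hL⟩ := rescale_clm l x hl0
    refine ⟨u₀.comp L, fun τ h hτ => ?_, ?_⟩
    · rw [ContinuousLinearMap.comp_apply]
      congr 1
      ext y
      rw [hL, hPK, hPK, ← heat_rescale l τ _ hl0 hτ]
      congr 1
      field_simp
      ring
    · apply hprof _ _ (by positivity)
      intro c φ hφ Φ hΦ
      have := hu (x + l * c) l hl φ hφ (L Φ) (fun y => by
        rw [hL, hΦ]
        congr 2
        field_simp
        ring)
      rw [ContinuousLinearMap.comp_apply]
      rw [Real.rpow_neg hl0.le, inv_mul_le_iff₀ (by positivity)] at this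
      linarith
  refine ⟨?_, ?_, ?_⟩
  · intro t x ht
    obtain ⟨l0, l1, τ, hτ1, hτ2, hτ⟩ := tnorm_facts t T ht.1 ht.2
    set l := tnorm t with hl
    obtain ⟨v, hv1, hv2⟩ := main l x ⟨l0, l1⟩
    have h1 := hv2 (PK τ 0) A hA (hA1 τ ⟨hτ1, by linarith⟩)
    rw [hv1 τ 0 (by linarith), ← hτ, mul_zero, add_zero] at h1
    linarith
  · intro t x xb ht hx hne
    obtain ⟨l0, l1, τ, hτ1, hτ2, hτ⟩ := tnorm_facts t T ht.1 ht.2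
    set l := tnorm t with hl
    obtain ⟨v, hv1, hv2⟩ := main l x ⟨l0, l1⟩
    have hd : 0 < |xb - x| := abs_pos.2 (sub_ne_zero.2 hne.symm)
    have hh : |(xb - x) / l| = |xb - x| / l := by rw [abs_div, abs_of_pos l0]
    have hh0 : 0 < |(xb - x) / l| := by rw [hh]; positivity
    have hh1 : |(xb - x) / l| ≤ 1 := by rw [hh, div_le_one l0]; exact hx
    have h1 := hv2 (PK τ ((xb - x) / l) - PK τ 0) (A * |(xb - x) / l|) (by positivity)
      (hA2 τ ⟨hτ1, by linarith⟩ _ hh1)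
    rw [map_sub, hv1 τ _ (by linarith), hv1 τ 0 (by linarith), ← hτ, mul_zero, add_zero,
      mul_div_cancel₀ _ l0.ne', add_sub_cancel] at h1
    refine h1.trans ?_
    have h2 : |(xb - x) / l| ≤ |(xb - x) / l| ^ γ := by
      conv_lhs => rw [← Real.rpow_one |(xb - x) / l|]
      exact Real.rpow_le_rpow_of_exponent_ge hh0 hh1 hγ.2.le
    have h3 : |(xb - x) / l| ^ γ * l ^ η = l ^ (η - γ) * |xb - x| ^ γ := by
      rw [hh, Real.div_rpow hd.le l0.le, Real.rpow_sub l0]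
      ring
    calc _ = K * A * M * (|(xb - x) / l| * l ^ η) := by ring
      _ ≤ K * A * M * (|(xb - x) / l| ^ γ * l ^ η) := by gcongr
      _ = _ := by rw [h3]
  · intro x t tb ht htb htbT hd
    obtain ⟨l0, l1, τ, hτ1, hτ2, hτ⟩ := tnorm_facts t T ht (by linarith)
    set l := tnorm t with hl
    obtain ⟨v, hv1, hv2⟩ := main l x ⟨l0, l1⟩
    have hl2 : 0 < l ^ 2 := by positivity
    set δ := (tb - t) / l ^ 2 with hδ
    have hd0 : 0 < tb - t := by linarith
    have hδ0 : 0 < δ := by positivity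
    have hδ1 : δ ≤ 1 := by rw [hδ, div_le_one hl2]; exact hd
    have htb' : l ^ 2 * (τ + δ) = tb := by
      rw [mul_add, ← hτ, hδ, mul_div_cancel₀ _ hl2.ne']; ring
    have h1 := hv2 (PK (τ + δ) 0 - PK τ 0) (A * |τ + δ - τ|)
      (by rw [add_sub_cancel_left, abs_of_pos hδ0]; positivity)
      (hA3 τ ⟨hτ1, by linarith⟩ (τ + δ) ⟨by linarith, by linarith⟩)
    rw [map_sub, hv1 (τ + δ) 0 (by linarith), hv1 τ 0 (by linarith), ← hτ, htb', mul_zero, add_zero,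
      add_sub_cancel_left, abs_of_pos hδ0] at h1
    refine h1.trans ?_
    have h2 : δ ≤ δ ^ (γ / 2) := by
      conv_lhs => rw [← Real.rpow_one δ]
      exact Real.rpow_le_rpow_of_exponent_ge hδ0 hδ1 (by linarith [hγ.2, hγ.1])
    have h3 : δ ^ (γ / 2) * l ^ η = l ^ (η - γ) * (tb - t) ^ (γ / 2) := by
      have e : (l ^ 2) ^ (γ / 2) = l ^ γ := by
        rw [← Real.rpow_natCast, ← Real.rpow_mul l0.le]
        congr 1
        push_cast; ring
      rw [hδ, Real.div_rpow hd0.le hl2.le, e, Real.rpow_sub l0]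
      ring
    calc _ = K * A * M * (δ * l ^ η) := by ring
      _ ≤ K * A * M * (δ ^ (γ / 2) * l ^ η) := by gcongr
      _ = _ := by rw [h3]

/-- for a `1`-periodic distribution `u₀ ∈ C^η` with `η ∈ (-1,0)`,
the caloric extension `P u₀ (t,x) = ⟨u₀, P_t(x-·)⟩` lies in `C^{γ,s}_{η,T}` for
every `γ ∈ (0,1)`, with norm controlled by `‖u₀‖_{C^η}`.  Here `PK t x` is the
Schwartz function `y ↦ P_t(x-y)` (for `t > 0`), supplied as a hypothesis, and
`M` is any bound for the `C^η`-norm of `u₀`. -/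
theorem statement3 (η : ℝ) (hη : η ∈ Set.Ioo (-1 : ℝ) 0) (T : ℝ) (hT : 0 < T)
    (r : ℕ) (hr : 1 ≤ r) (γ : ℝ) (hγ : γ ∈ Set.Ioo (0 : ℝ) 1) :
    ∃ C : ℝ, 0 < C ∧
      ∀ u₀ : SchwartzMap ℝ ℝ →L[ℝ] ℝ,
        (∀ Φ Φ' : SchwartzMap ℝ ℝ, (∀ y : ℝ, Φ' y = Φ (y - 1)) → u₀ Φ' = u₀ Φ) →
        ∀ M : ℝ, 0 ≤ M →
        (∀ x lam : ℝ, lam ∈ Set.Ioc (0 : ℝ) 1 →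
          ∀ φ : ℝ → ℝ, IsTestFunction r φ →
          ∀ Φ : SchwartzMap ℝ ℝ, (∀ y : ℝ, Φ y = lam⁻¹ * φ (lam⁻¹ * (y - x))) →
          lam ^ (-η) * |u₀ Φ| ≤ M) →
        ∀ PK : ℝ → ℝ → SchwartzMap ℝ ℝ,
        (∀ t x y : ℝ, PK t x y = heatKernel t (x - y)) →
        (∀ t x : ℝ, t ∈ Set.Ioc (0 : ℝ) T →
          tnorm t ^ (-η) * |u₀ (PK t x)| ≤ C * M) ∧
        (∀ t x xb : ℝ, t ∈ Set.Ioc (0 : ℝ) T → x ≠ xb →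
          |u₀ (PK t xb) - u₀ (PK t x)| ≤
            C * M * (tnorm t ^ (η - γ) * |xb - x| ^ γ)) ∧
        (∀ x t tb : ℝ, t ∈ Set.Ioc (0 : ℝ) T → tb ∈ Set.Ioc (0 : ℝ) T → t ≠ tb →
          |tb - t| ≤ tnorm2 t tb ^ 2 →
          |u₀ (PK tb x) - u₀ (PK t x)| ≤
            C * M * (tnorm2 t tb ^ (η - γ) * |tb - t| ^ (γ / 2))) := by
  by_cases hex : ∃ PK : ℝ → ℝ → SchwartzMap ℝ ℝ, ∀ t x y : ℝ, PK t x y = heatKernel t (x - y)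
  swap
  · exact ⟨1, one_pos, fun _ _ _ _ _ PK hPK => absurd ⟨PK, hPK⟩ hex⟩
  obtain ⟨PK₀, hPK₀⟩ := hex
  obtain ⟨C, hC, h⟩ := core_bounds η r T γ hγ PK₀ hPK₀
  refine ⟨2 * C, by positivity, fun u₀ _ M hM hu PK hPK => ?_⟩
  have hPKeq : PK = PK₀ := by
    funext t x
    ext y
    rw [hPK, hPK₀]
  subst hPKeq
  obtain ⟨h1, h2, h3⟩ := h u₀ M hM hu
  have hCM : 0 ≤ C * M := by positivity
  refine ⟨?_, ?_, ?_⟩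
  · intro t x ht
    obtain ⟨l0, -, -⟩ := tnorm_facts t T ht.1 ht.2
    rw [Real.rpow_neg l0.le, inv_mul_le_iff₀ (by positivity)]
    have h4 : 0 < tnorm t ^ η := by positivity
    have := h1 t x ht
    nlinarith [mul_nonneg hCM h4.le]
  · intro t x xb ht hne
    obtain ⟨l0, -, -⟩ := tnorm_facts t T ht.1 ht.2
    have hd : 0 < |xb - x| := abs_pos.2 (sub_ne_zero.2 hne.symm)
    rcases le_total |xb - x| (tnorm t) with hx | hx
    · refine (h2 t x xb ht hx hne).trans ?_
      have : 0 ≤ C * M * (tnorm t ^ (η - γ) * |xb - x| ^ γ) := by positivity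
      linarith
    · have ha := h1 t x ht
      have hb := h1 t xb ht
      have hc : tnorm t ^ η ≤ tnorm t ^ (η - γ) * |xb - x| ^ γ := by
        have e : tnorm t ^ η = tnorm t ^ (η - γ) * tnorm t ^ γ := by
          rw [← Real.rpow_add l0]; congr 1; ring
        rw [e]
        exact mul_le_mul_of_nonneg_left (Real.rpow_le_rpow l0.le hx hγ.1.le) (by positivity)
      have hd := mul_le_mul_of_nonneg_left hc hCM
      have := abs_sub (u₀ (PK t xb)) (u₀ (PK t x))
      linarith
  · have key : ∀ x t tb : ℝ, 0 < t → t < tb → tb ≤ T → |tb - t| ≤ tnorm2 t tb ^ 2 →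
        |u₀ (PK tb x) - u₀ (PK t x)| ≤
          2 * C * M * (tnorm2 t tb ^ (η - γ) * |tb - t| ^ (γ / 2)) := by
      intro x t tb ht htb htbT hd
      have e : tnorm2 t tb = tnorm t := min_eq_left (tnorm_mono t tb ht htb.le)
      obtain ⟨l0, -, -⟩ := tnorm_facts t T ht (by linarith)
      have hpos : 0 < tb - t := by linarith
      rw [abs_of_pos hpos, e] at hd ⊢
      refine (h3 x t tb ht htb htbT hd).trans ?_
      have : 0 ≤ C * M * (tnorm t ^ (η - γ) * (tb - t) ^ (γ / 2)) := by positivity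
      linarith
    intro x t tb ht htb hne hd
    rcases lt_or_gt_of_ne hne with hlt | hlt
    · exact key x t tb ht.1 hlt htb.2 hd
    · rw [abs_sub_comm, tnorm2_symm, abs_sub_comm tb t]
      refine key x tb t htb.1 hlt ht.2 ?_
      rw [abs_sub_comm, tnorm2_symm]
      exact hd
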